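/- Suppose 1 < p, q < ∞ and the pair (p,q) satisfies one of the following: p = q = 2; p = 2 and q ≠ 2; q = 2 and p ≠ 2; p = q ≠ 2; or 1 < q < 2 < p < ∞. Let x = (x1,x2) be an ℓ^p-unit vector and y = (y1,y2) an ℓ^q-unit vector with x1·x2·y1·y2 ≠ 0. Then the rank-one operator x^{p−1}⊗y has operator norm 1 from ℓ^p_2 to ℓ^q_2 but does not belong to the operator-norm closure of the set of extreme points of the closed unit ball of L(ℓ^p_2, ℓ^q_2). -/

import Mathlib

/-!
The argument is a second order comparison of norms; it works alike for all exponents `p, q > 1`.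

For a unit vector `u` of `ℓ^p` put `f = u^{p-1}`, so that `f · u = 1` and every `z` decomposes as
`z = (f · z) u + (u^o · z) f^o`. As long as the coordinates of `u` stay away from `0`, the
`ℓ^p` norm is squeezed between two quadratic forms in these coordinates,
`(f · z)² + c (u^o · z)² ≤ ‖z‖_p² ≤ (f · z)² + C (u^o · z)²`, with `c, C > 0` depending only on `p`
and on the lower bound for the coordinates (`lower_bound`, `upper_bound`). The lower bound comes
from a quantitative tangent line inequality for `|t|^p`; the upper one is its dual.

Suppose extreme contractions `S_n` converge to `T = x^{p-1} ⊗ y`. Each attains its norm `1` at some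
unit vector `u_n`, and after passing to a subsequence `u_n → ±x` and `v_n = S_n u_n → ±y`. With
`f_n = u_n^{p-1}` and `g_n = v_n^{q-1}`, a first order argument (`attain_orth`) shows that
`S_n = f_n ⊗ v_n + s_n (u_n^o ⊗ g_n^o)`, where `s_n → 0`. The two quadratic bounds show that such an
operator is a contraction whenever `C s² ≤ c`; hence `s_n` can be moved in both directions and `S_n`
is not extreme.
-/

noncomputable section

/-- The ℓ^r norm on ℝ². -/
def pnorm (r : ℝ) (z : ℝ × ℝ) : ℝ := (|z.1| ^ r + |z.2| ^ r) ^ (1 / r)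

/-- Apply a 2×2 real matrix, viewed as a linear operator ℝ² → ℝ², to a vector. -/
def app (A : Matrix (Fin 2) (Fin 2) ℝ) (z : ℝ × ℝ) : ℝ × ℝ :=
  (A 0 0 * z.1 + A 0 1 * z.2, A 1 0 * z.1 + A 1 1 * z.2)

/-- Operator norm from ℓ^p_2 to ℓ^q_2. -/
def opNorm (p q : ℝ) (A : Matrix (Fin 2) (Fin 2) ℝ) : ℝ :=
  sSup {c : ℝ | ∃ z : ℝ × ℝ, pnorm p z = 1 ∧ c = pnorm q (app A z)}

/-- Closed unit ball of L(ℓ^p_2, ℓ^q_2). -/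
def unitBall (p q : ℝ) : Set (Matrix (Fin 2) (Fin 2) ℝ) := {A | opNorm p q A ≤ 1}

/-- The rank-one operator u ⊗ v : z ↦ (u·z)·v. -/
def tensor (u v : ℝ × ℝ) : Matrix (Fin 2) (Fin 2) ℝ :=
  !![v.1 * u.1, v.1 * u.2; v.2 * u.1, v.2 * u.2]

/-- Signed power of a vector: (sgn z1 |z1|^r, sgn z2 |z2|^r). -/
def spow (z : ℝ × ℝ) (r : ℝ) : ℝ × ℝ :=
  (Real.sign z.1 * |z.1| ^ r, Real.sign z.2 * |z.2| ^ r)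

/-- Rotation: z^o = (−z2, z1). -/
def rot (z : ℝ × ℝ) : ℝ × ℝ := (-z.2, z.1)

open Filter Topology

/-- The signed power `sgn(t) |t|^r` of a real number. -/
def sp (t r : ℝ) : ℝ := Real.sign t * |t| ^ r

/-- The standard bilinear pairing on `ℝ²`. -/
def dot (a b : ℝ × ℝ) : ℝ := a.1 * b.1 + a.2 * b.2

lemma spow_eq (z : ℝ × ℝ) (r : ℝ) : spow z r = (sp z.1 r, sp z.2 r) := rfl

lemma sp_pos {t : ℝ} (ht : 0 < t) (r : ℝ) : sp t r = t ^ r := by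
  simp [sp, Real.sign_of_pos ht, abs_of_pos ht]

lemma sp_neg (t r : ℝ) : sp (-t) r = - sp t r := by
  simp [sp, Real.sign_neg]

lemma sp_zero (r : ℝ) : sp 0 r = 0 := by simp [sp]

lemma abs_sp (t : ℝ) {r : ℝ} (hr : 0 < r) : |sp t r| = |t| ^ r := by
  rcases lt_trichotomy t 0 with h | h | h
  · have := sp_pos (neg_pos.2 h) r
    rw [sp_neg] at this
    rw [← abs_neg, this, abs_of_neg h, abs_of_nonneg (Real.rpow_nonneg (by linarith) _)]
  · subst h; simp [sp_zero, Real.zero_rpow hr.ne']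
  · rw [sp_pos h, abs_of_pos h, abs_of_nonneg (Real.rpow_nonneg h.le _)]

lemma sp_mul_self (t : ℝ) {r : ℝ} (hr : 1 < r) : sp t (r - 1) * t = |t| ^ r := by
  have key : ∀ a : ℝ, 0 < a → sp a (r - 1) * a = |a| ^ r := by
    intro a ha
    rw [sp_pos ha, abs_of_pos ha]
    nth_rewrite 2 [← Real.rpow_one a]
    rw [← Real.rpow_add ha]; congr 1; ring
  rcases lt_trichotomy t 0 with h | h | h
  · have := key _ (neg_pos.2 h)
    rw [sp_neg, abs_neg] at this
    linarith
  · subst h; simp [Real.zero_rpow (by linarith : r ≠ 0)]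
  · exact key t h

lemma sp_sp (t : ℝ) {r : ℝ} (hr : 0 < r) : sp (sp t r) (1 / r) = t := by
  have key : ∀ a : ℝ, 0 < a → sp (sp a r) (1 / r) = a := by
    intro a ha
    rw [sp_pos ha, sp_pos (Real.rpow_pos_of_pos ha _), ← Real.rpow_mul ha.le,
      mul_one_div_cancel hr.ne', Real.rpow_one]
  rcases lt_trichotomy t 0 with h | h | h
  · have := key _ (neg_pos.2 h)
    rw [sp_neg, sp_neg] at this
    linarith
  · subst h; simp [sp_zero]
  · exact key t h

lemma continuous_sp {r : ℝ} (hr : 0 < r) : Continuous fun t => sp t r := by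
  have : (fun t => sp t r) = fun t => (max t 0) ^ r - (max (-t) 0) ^ r := by
    funext t
    rcases lt_trichotomy t 0 with h | h | h
    · have := sp_pos (neg_pos.2 h) r
      rw [sp_neg] at this
      rw [max_eq_right h.le, max_eq_left (by linarith), Real.zero_rpow hr.ne']
      linarith
    · subst h; simp [sp_zero]
    · rw [max_eq_left h.le, max_eq_right (by linarith), Real.zero_rpow hr.ne', sp_pos h]; ring
  rw [this]
  exact ((continuous_id.max continuous_const).rpow_const fun _ => Or.inr hr.le).sub
    ((continuous_neg.max continuous_const).rpow_const fun _ => Or.inr hr.le)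

lemma continuous_spow {r : ℝ} (hr : 0 < r) : Continuous fun z => spow z r :=
  ((continuous_sp hr).comp continuous_fst).prodMk ((continuous_sp hr).comp continuous_snd)

/-! ### The norm of `ℓ^r` and the operator norm -/

lemma psum_nonneg (r : ℝ) (z : ℝ × ℝ) : 0 ≤ |z.1| ^ r + |z.2| ^ r := by positivity

lemma pnorm_nonneg (r : ℝ) (z : ℝ × ℝ) : 0 ≤ pnorm r z := by unfold pnorm; positivity

lemma pnorm_rpow {r : ℝ} (hr : 0 < r) (z : ℝ × ℝ) : pnorm r z ^ r = |z.1| ^ r + |z.2| ^ r := by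
  rw [pnorm, ← Real.rpow_mul (psum_nonneg r z), one_div_mul_cancel hr.ne', Real.rpow_one]

lemma pnorm_eq_one {r : ℝ} (hr : 0 < r) {z : ℝ × ℝ} :
    pnorm r z = 1 ↔ |z.1| ^ r + |z.2| ^ r = 1 := by
  constructor
  · intro h; rw [← pnorm_rpow hr, h, Real.one_rpow]
  · intro h; rw [pnorm, h, Real.one_rpow]

lemma pnorm_smul {r : ℝ} (hr : 0 < r) (c : ℝ) (z : ℝ × ℝ) :
    pnorm r (c • z) = |c| * pnorm r z := by
  have : |(c • z).1| ^ r + |(c • z).2| ^ r = |c| ^ r * (|z.1| ^ r + |z.2| ^ r) := by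
    simp only [Prod.smul_fst, Prod.smul_snd, smul_eq_mul, abs_mul]
    rw [Real.mul_rpow (abs_nonneg _) (abs_nonneg _), Real.mul_rpow (abs_nonneg _) (abs_nonneg _)]
    ring
  rw [pnorm, this, Real.mul_rpow (by positivity) (psum_nonneg r z), ← Real.rpow_mul (abs_nonneg _),
    mul_one_div_cancel hr.ne', Real.rpow_one, pnorm]

lemma abs_le_pnorm {r : ℝ} (hr : 0 < r) (z : ℝ × ℝ) : |z.1| ≤ pnorm r z ∧ |z.2| ≤ pnorm r z := by
  constructor <;>
  · rw [← Real.rpow_le_rpow_iff (abs_nonneg _) (pnorm_nonneg r z) hr, pnorm_rpow hr]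
    have h1 : 0 ≤ |z.1| ^ r := by positivity
    have h2 : 0 ≤ |z.2| ^ r := by positivity
    linarith

lemma pnorm_pos {r : ℝ} (hr : 0 < r) {z : ℝ × ℝ} (hz : z ≠ 0) : 0 < pnorm r z := by
  refine lt_of_le_of_ne (pnorm_nonneg r z) fun h => hz ?_
  have := abs_le_pnorm hr z
  rw [← h] at this
  exact Prod.ext (abs_nonpos_iff.1 this.1) (abs_nonpos_iff.1 this.2)

lemma pnorm_normalize {r : ℝ} (hr : 0 < r) {z : ℝ × ℝ} (hz : z ≠ 0) :
    pnorm r ((pnorm r z)⁻¹ • z) = 1 := by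
  rw [pnorm_smul hr, abs_of_pos (inv_pos.2 (pnorm_pos hr hz)),
    inv_mul_cancel₀ (pnorm_pos hr hz).ne']

lemma continuous_pnorm {r : ℝ} (hr : 0 < r) : Continuous (pnorm r) := by
  unfold pnorm
  exact ((continuous_fst.abs.rpow_const fun _ => Or.inr hr.le).add
    (continuous_snd.abs.rpow_const fun _ => Or.inr hr.le)).rpow_const
    fun _ => Or.inr (by positivity)

lemma app_smul (A : Matrix (Fin 2) (Fin 2) ℝ) (c : ℝ) (z : ℝ × ℝ) :
    app A (c • z) = c • app A z := by
  ext <;> simp [app] <;> ring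

lemma app_smul_left (A : Matrix (Fin 2) (Fin 2) ℝ) (c : ℝ) (z : ℝ × ℝ) :
    app (c • A) z = c • app A z := by
  ext <;> simp [app] <;> ring

lemma continuous_app (A : Matrix (Fin 2) (Fin 2) ℝ) : Continuous (app A) := by
  unfold app; fun_prop

lemma isCompact_pnorm_sphere {p : ℝ} (hp : 0 < p) : IsCompact {z : ℝ × ℝ | pnorm p z = 1} := by
  refine Metric.isCompact_of_isClosed_isBounded
    (isClosed_eq (continuous_pnorm hp) continuous_const) ?_
  refine (Metric.isBounded_closedBall (x := (0 : ℝ × ℝ)) (r := 1)).subset fun z hz => ?_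
  have hz' : pnorm p z = 1 := hz
  have := abs_le_pnorm hp z
  rw [hz'] at this
  rw [mem_closedBall_zero_iff, Prod.norm_def]
  exact max_le this.1 this.2

lemma pnorm_e1 {p : ℝ} (hp : 0 < p) : pnorm p (1, 0) = 1 := by
  rw [pnorm_eq_one hp]; simp [Real.zero_rpow hp.ne']

lemma pnorm_e2 {p : ℝ} (hp : 0 < p) : pnorm p (0, 1) = 1 := by
  rw [pnorm_eq_one hp]; simp [Real.zero_rpow hp.ne']

/-- The supremum defining `opNorm` is a genuine one, so `opNorm` bounds the values it is taken
over. -/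
lemma le_opNorm {p q : ℝ} (hp : 0 < p) (hq : 0 < q) (A : Matrix (Fin 2) (Fin 2) ℝ) {z : ℝ × ℝ}
    (hz : pnorm p z = 1) : pnorm q (app A z) ≤ opNorm p q A := by
  have hb := ((isCompact_pnorm_sphere hp).image ((continuous_pnorm hq).comp (continuous_app A))).bddAbove
  refine le_csSup (hb.mono ?_) ⟨z, hz, rfl⟩
  rintro c ⟨w, hw, rfl⟩
  exact ⟨w, hw, rfl⟩

lemma opNorm_le {p q : ℝ} (hp : 0 < p) {A : Matrix (Fin 2) (Fin 2) ℝ} {M : ℝ}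
    (h : ∀ z, pnorm p z = 1 → pnorm q (app A z) ≤ M) : opNorm p q A ≤ M := by
  refine csSup_le ⟨_, (1, 0), pnorm_e1 hp, rfl⟩ ?_
  rintro c ⟨w, hw, rfl⟩
  exact h w hw

lemma mem_unitBall {p q : ℝ} (hp : 0 < p) (hq : 0 < q) {A : Matrix (Fin 2) (Fin 2) ℝ} :
    A ∈ unitBall p q ↔ ∀ z, pnorm p z = 1 → pnorm q (app A z) ≤ 1 :=
  ⟨fun h _ hz => (le_opNorm hp hq A hz).trans h, fun h => opNorm_le hp h⟩

lemma pnorm_app_le {p q : ℝ} (hp : 0 < p) (hq : 0 < q) {A : Matrix (Fin 2) (Fin 2) ℝ}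
    (hA : A ∈ unitBall p q) (z : ℝ × ℝ) : pnorm q (app A z) ≤ pnorm p z := by
  by_cases hz : z = 0
  · subst hz
    have : app A 0 = (0 : ℝ) • (0 : ℝ × ℝ) := by ext <;> simp [app]
    rw [this, pnorm_smul hq, abs_zero, zero_mul]
    exact pnorm_nonneg p _
  have := (mem_unitBall hp hq).1 hA _ (pnorm_normalize hp hz)
  have hN := pnorm_pos hp hz
  rw [app_smul, pnorm_smul hq, abs_of_pos (inv_pos.2 hN), inv_mul_le_iff₀ hN, mul_one] at this
  exact this

lemma abs_entry_le {p q : ℝ} (hp : 0 < p) (hq : 0 < q) (A : Matrix (Fin 2) (Fin 2) ℝ)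
    (i j : Fin 2) : |A i j| ≤ opNorm p q A := by
  have h1 := le_opNorm hp hq A (pnorm_e1 hp)
  have h2 := le_opNorm hp hq A (pnorm_e2 hp)
  have h3 := abs_le_pnorm hq (app A (1, 0))
  have h4 := abs_le_pnorm hq (app A (0, 1))
  simp only [app, mul_one, mul_zero, add_zero, zero_add] at h1 h2 h3 h4
  fin_cases i <;> fin_cases j
  · exact h3.1.trans h1
  · exact h4.1.trans h2
  · exact h3.2.trans h1
  · exact h4.2.trans h2

/-! ### Quadratic bounds for the norm of `ℓ^p` -/

/-- A tangent line inequality for `|t|^p` at `t = 1` with a quadratic gain on bounded sets. For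
`p ≥ 2` it is Bernoulli's inequality for `t²`; for `p < 2` it follows from the weighted AM-GM
inequality `t^{2-p} ≤ 1 + (2 - p)(t - 1)`. -/
lemma tangent_bound {p : ℝ} (hp : 1 < p) {R : ℝ} (hR : 0 < R) :
    ∃ k : ℝ, 0 < k ∧ ∀ t : ℝ, |t| ≤ R → 1 + p * (t - 1) + k * (t - 1) ^ 2 ≤ |t| ^ p := by
  rcases le_or_gt 2 p with h2 | h2
  · refine ⟨p / 2, by linarith, fun t _ => ?_⟩
    have hB := one_add_mul_self_le_rpow_one_add (s := t ^ 2 - 1) (by nlinarith [sq_nonneg t])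
      (p := p / 2) (by linarith)
    have : (1 + (t ^ 2 - 1)) ^ (p / 2) = |t| ^ p := by
      rw [add_sub_cancel, ← sq_abs, ← Real.rpow_natCast, ← Real.rpow_mul (abs_nonneg _)]
      congr 1; push_cast; ring
    rw [this] at hB
    linarith
  · refine ⟨(p - 1) ^ 2 / (1 + R), by have := sub_pos.2 hp; positivity, fun t ht => ?_⟩
    have hR1 : 0 < 1 + R := by linarith
    rcases le_or_gt t 0 with h0 | h0
    · refine le_trans ?_ (Real.rpow_nonneg (abs_nonneg t) p)
      rw [abs_of_nonpos h0] at ht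
      have h1 : (p - 1) ^ 2 / (1 + R) * (1 - t) ≤ p - 1 := by
        rw [div_mul_eq_mul_div, div_le_iff₀ hR1]
        have := mul_le_mul_of_nonneg_left (by linarith : 1 - t ≤ 1 + R) (sq_nonneg (p - 1))
        nlinarith [mul_pos (mul_pos (sub_pos.2 hp) (sub_pos.2 h2)) hR1]
      have h3 := mul_le_mul_of_nonneg_right h1 (by linarith : (0:ℝ) ≤ 1 - t)
      nlinarith
    · rw [abs_of_pos h0] at ht ⊢
      have hc : t ^ (2 - p) ≤ 1 + (2 - p) * (t - 1) := by
        have := rpow_one_add_le_one_add_mul_self (s := t - 1) (by linarith) (p := 2 - p)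
          (by linarith) (by linarith)
        rwa [add_sub_cancel] at this
      set d := 1 + (2 - p) * (t - 1) with hd
      have hd0 : 0 < d := lt_of_lt_of_le (Real.rpow_pos_of_pos h0 _) hc
      have hdR : d ≤ 1 + R := by nlinarith
      have ht2 : t ^ 2 ≤ t ^ p * d := by
        calc t ^ 2 = t ^ p * t ^ (2 - p) := by
              rw [← Real.rpow_add h0, ← Real.rpow_natCast]; congr 1; push_cast; ring
          _ ≤ _ := mul_le_mul_of_nonneg_left hc (Real.rpow_nonneg h0.le _)
      have hk : (p - 1) ^ 2 / (1 + R) * d ≤ (p - 1) ^ 2 := by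
        rw [div_mul_eq_mul_div, div_le_iff₀ hR1]
        exact mul_le_mul_of_nonneg_left hdR (sq_nonneg _)
      have hk2 := mul_le_mul_of_nonneg_right hk (sq_nonneg (t - 1))
      refine le_of_mul_le_mul_right ?_ hd0
      refine le_trans ?_ ht2
      have : (1 + p * (t - 1)) * d + (p - 1) ^ 2 * (t - 1) ^ 2 = t ^ 2 := by rw [hd]; ring
      linarith

/-- The lower quadratic bound on the unit sphere: the tangent line inequality is applied to the
coordinate quotients `z_i / u_i` and summed with weights `|u_i|^p`. -/
lemma lower_bound_ball {p : ℝ} (hp : 1 < p) {m : ℝ} (hm : 0 < m) :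
    ∃ c : ℝ, 0 < c ∧ ∀ u : ℝ × ℝ, pnorm p u = 1 → m ≤ |u.1| → m ≤ |u.2| →
      ∀ z : ℝ × ℝ, pnorm p z = 1 →
        dot (spow u (p - 1)) z ^ 2 + c * dot (rot u) z ^ 2 ≤ 1 := by
  have hp0 : 0 < p := by linarith
  obtain ⟨k, hk, hkt⟩ := tangent_bound hp (R := 1 / m) (by positivity)
  set μ := m ^ p with hμ
  have hμ0 : 0 < μ := Real.rpow_pos_of_pos hm p
  refine ⟨k * μ / (2 * p), by positivity, fun u hu hu1 hu2 => ?_⟩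
  have hu1le := (abs_le_pnorm hp0 u).1
  have hu2le := (abs_le_pnorm hp0 u).2
  rw [hu] at hu1le hu2le
  have hsu := (pnorm_eq_one hp0).1 hu
  have hu10 : u.1 ≠ 0 := by rintro h; rw [h, abs_zero] at hu1; linarith
  have hu20 : u.2 ≠ 0 := by rintro h; rw [h, abs_zero] at hu2; linarith
  have main : ∀ z : ℝ × ℝ, pnorm p z = 1 →
      dot (spow u (p - 1)) z ≤ 1 - k * μ / (2 * p) * dot (rot u) z ^ 2 := by
    intro z hz
    have hz1 := (abs_le_pnorm hp0 z).1
    have hz2 := (abs_le_pnorm hp0 z).2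
    rw [hz] at hz1 hz2
    have hsz := (pnorm_eq_one hp0).1 hz
    obtain ⟨t1, ht1⟩ : ∃ t, z.1 = t * u.1 := ⟨z.1 / u.1, by field_simp⟩
    obtain ⟨t2, ht2⟩ : ∃ t, z.2 = t * u.2 := ⟨z.2 / u.2, by field_simp⟩
    have hb : ∀ t w : ℝ, |t * w| ≤ 1 → m ≤ |w| → |t| ≤ 1 / m := by
      intro t w h1 h2
      rw [le_div_iff₀ hm]
      rw [abs_mul] at h1
      exact (mul_le_mul_of_nonneg_left h2 (abs_nonneg t)).trans h1
    have hk1 := hkt t1 (hb _ _ (ht1 ▸ hz1) hu1)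
    have hk2 := hkt t2 (hb _ _ (ht2 ▸ hz2) hu2)
    rw [ht1, ht2, abs_mul, abs_mul, Real.mul_rpow (abs_nonneg _) (abs_nonneg _),
      Real.mul_rpow (abs_nonneg _) (abs_nonneg _)] at hsz
    have hdot : dot (spow u (p - 1)) z = t1 * |u.1| ^ p + t2 * |u.2| ^ p := by
      rw [← sp_mul_self _ hp, ← sp_mul_self _ hp, dot, spow_eq, ht1, ht2]; ring
    have hrot : dot (rot u) z = u.1 * u.2 * (t2 - t1) := by
      rw [dot, rot, ht1, ht2]; ring
    have hU1 : μ ≤ |u.1| ^ p := Real.rpow_le_rpow hm.le hu1 hp0.le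
    have hU2 : μ ≤ |u.2| ^ p := Real.rpow_le_rpow hm.le hu2 hp0.le
    set U1 := |u.1| ^ p
    set U2 := |u.2| ^ p
    have e1 := mul_le_mul_of_nonneg_right hk1 (hμ0.le.trans hU1)
    have e2 := mul_le_mul_of_nonneg_right hk2 (hμ0.le.trans hU2)
    have e3 := mul_le_mul_of_nonneg_left hU1 (by positivity : 0 ≤ k * (t1 - 1) ^ 2)
    have e4 := mul_le_mul_of_nonneg_left hU2 (by positivity : 0 ≤ k * (t2 - 1) ^ 2)
    have e5 : dot (rot u) z ^ 2 ≤ 2 * ((t1 - 1) ^ 2 + (t2 - 1) ^ 2) := by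
      have a1 : u.1 ^ 2 ≤ 1 := by exact (sq_le_one_iff_abs_le_one _).2 hu1le
      have a2 : u.2 ^ 2 ≤ 1 := by exact (sq_le_one_iff_abs_le_one _).2 hu2le
      have a3 : u.1 ^ 2 * u.2 ^ 2 ≤ 1 := by exact mul_le_one₀ a1 (sq_nonneg _) a2
      rw [hrot, mul_pow, mul_pow]
      have a4 := mul_le_mul_of_nonneg_right a3 (sq_nonneg (t2 - t1))
      have a5 : (t2 - t1) ^ 2 ≤ 2 * ((t1 - 1) ^ 2 + (t2 - 1) ^ 2) := by
        have := sq_nonneg (t1 - 1 + (t2 - 1))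
        linarith
      linarith
    have e6 := mul_le_mul_of_nonneg_left e5 (by positivity : 0 ≤ k * μ)
    have e7 : p * (dot (spow u (p - 1)) z - 1) + k * μ * ((t1 - 1) ^ 2 + (t2 - 1) ^ 2) ≤ 0 := by
      have : p * (dot (spow u (p - 1)) z - 1) = p * (t1 - 1) * U1 + p * (t2 - 1) * U2 := by
        rw [hdot]; linear_combination p * (hsu : U1 + U2 = 1)
      linarith
    have e8 : p * (dot (spow u (p - 1)) z)
        ≤ p * (1 - k * μ / (2 * p) * dot (rot u) z ^ 2) := by
      have : p * (k * μ / (2 * p) * dot (rot u) z ^ 2) = k * μ * dot (rot u) z ^ 2 / 2 := by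
        field_simp
      linarith
    exact le_of_mul_le_mul_left e8 hp0
  intro z hz
  have h1 := main z hz
  have h2 := main ((-1 : ℝ) • z) (by rw [pnorm_smul hp0, hz]; simp)
  have n1 : dot (spow u (p - 1)) ((-1 : ℝ) • z) = - dot (spow u (p - 1)) z := by
    simp [dot]; ring
  have n2 : dot (rot u) ((-1 : ℝ) • z) = - dot (rot u) z := by
    simp [dot]; ring
  rw [n1, n2, neg_sq] at h2
  have h3 : 0 ≤ k * μ / (2 * p) * dot (rot u) z ^ 2 := by positivity
  nlinarith

lemma dot_smul (a z : ℝ × ℝ) (c : ℝ) : dot a (c • z) = c * dot a z := by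
  simp [dot]; ring

/-- The lower quadratic bound `(f · z)² + c (u^o · z)² ≤ ‖z‖_p²`, uniform over unit vectors `u`
with coordinates bounded away from `0`. -/
lemma lower_bound {p : ℝ} (hp : 1 < p) {m : ℝ} (hm : 0 < m) :
    ∃ c : ℝ, 0 < c ∧ ∀ u : ℝ × ℝ, pnorm p u = 1 → m ≤ |u.1| → m ≤ |u.2| →
      ∀ z : ℝ × ℝ, dot (spow u (p - 1)) z ^ 2 + c * dot (rot u) z ^ 2 ≤ pnorm p z ^ 2 := by
  have hp0 : 0 < p := by linarith
  obtain ⟨c, hc, h⟩ := lower_bound_ball hp hm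
  refine ⟨c, hc, fun u hu h1 h2 z => ?_⟩
  by_cases hz : z = 0
  · subst hz; simp [dot]; positivity
  have hN := pnorm_pos hp0 hz
  have := h u hu h1 h2 _ (pnorm_normalize hp0 hz)
  rw [dot_smul, dot_smul, mul_pow, mul_pow, inv_pow] at this
  have hN2 : 0 < pnorm p z ^ 2 := by positivity
  have h3 := mul_le_mul_of_nonneg_left this hN2.le
  have h4 : pnorm p z ^ 2 * ((pnorm p z ^ 2)⁻¹ * dot (spow u (p - 1)) z ^ 2 +
      c * ((pnorm p z ^ 2)⁻¹ * dot (rot u) z ^ 2)) =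
      dot (spow u (p - 1)) z ^ 2 + c * dot (rot u) z ^ 2 := by field_simp
  linarith

/-- Raising to the power `q - 1` maps the unit sphere of `ℓ^q` to that of the dual space
`ℓ^{q'}`, where `q' = 1 + 1 / (q - 1)`. -/
lemma pnorm_spow {q : ℝ} (hq : 1 < q) {v : ℝ × ℝ} (hv : pnorm q v = 1) :
    pnorm (1 + 1 / (q - 1)) (spow v (q - 1)) = 1 := by
  have hq1 : 0 < q - 1 := by linarith
  rw [pnorm_eq_one (by positivity), spow_eq, abs_sp _ hq1, abs_sp _ hq1,
    ← Real.rpow_mul (abs_nonneg _), ← Real.rpow_mul (abs_nonneg _)]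
  have : (q - 1) * (1 + 1 / (q - 1)) = q := by field_simp; ring
  rw [this]
  exact (pnorm_eq_one (by linarith)).1 hv

lemma dot_spow_self {q : ℝ} (hq : 1 < q) {v : ℝ × ℝ} (hv : pnorm q v = 1) :
    dot (spow v (q - 1)) v = 1 := by
  rw [dot, spow_eq, sp_mul_self _ hq, sp_mul_self _ hq]
  exact (pnorm_eq_one (by linarith)).1 hv

/-- The upper quadratic bound `‖w‖_q² ≤ (g · w)² + C (v^o · w)²`. It is dual to the lower bound in
`ℓ^{q'}` at the unit vector `g = v^{q-1}`, for which `g^{q'-1} = v`. -/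
lemma upper_bound {q : ℝ} (hq : 1 < q) {m : ℝ} (hm : 0 < m) :
    ∃ C : ℝ, 0 < C ∧ ∀ v : ℝ × ℝ, pnorm q v = 1 → m ≤ |v.1| → m ≤ |v.2| →
      ∀ w : ℝ × ℝ, pnorm q w ^ 2 ≤ dot (spow v (q - 1)) w ^ 2 + C * dot (rot v) w ^ 2 := by
  have hq0 : 0 < q := by linarith
  have hq1 : 0 < q - 1 := by linarith
  obtain ⟨c, hc, h⟩ := lower_bound_ball (p := 1 + 1 / (q - 1)) (m := m ^ (q - 1))
    (by have : 0 < 1 / (q - 1) := by positivity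
        linarith) (Real.rpow_pos_of_pos hm _)
  refine ⟨1 / c, by positivity, fun v hv h1 h2 => ?_⟩
  have hunit : ∀ w : ℝ × ℝ, pnorm q w = 1 →
      1 ≤ dot (spow v (q - 1)) w ^ 2 + 1 / c * dot (rot v) w ^ 2 := by
    intro w hw
    have key := h (spow v (q - 1)) (pnorm_spow hq hv)
      (by rw [spow_eq, abs_sp _ hq1]; exact Real.rpow_le_rpow hm.le h1 hq1.le)
      (by rw [spow_eq, abs_sp _ hq1]; exact Real.rpow_le_rpow hm.le h2 hq1.le)
      (spow w (q - 1)) (pnorm_spow hq hw)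
    have hvv : spow (spow v (q - 1)) (1 + 1 / (q - 1) - 1) = v := by
      rw [add_sub_cancel_left, spow_eq, spow_eq]
      simp only [sp_sp _ hq1]
    rw [hvv] at key
    have hw1 := dot_spow_self hq hw
    have hv1 := dot_spow_self hq hv
    set g := spow v (q - 1)
    set k := spow w (q - 1)
    have hdec : 1 = dot g w * dot v k + dot (rot v) w * dot (rot g) k := by
      rw [← hw1]
      simp only [dot, rot] at *
      linear_combination (k.1 * w.1 + k.2 * w.2) * (- hv1)
    set A := dot g w
    set B := dot (rot v) w
    set α := dot v k
    set β := dot (rot g) k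
    -- Cauchy-Schwarz for the quadratic form `α² + c β²` and its dual `A² + B² / c`
    have cs : (A * α + B * β) ^ 2 ≤ (A ^ 2 + 1 / c * B ^ 2) * (α ^ 2 + c * β ^ 2) := by
      have : (A ^ 2 + 1 / c * B ^ 2) * (α ^ 2 + c * β ^ 2) - (A * α + B * β) ^ 2
          = 1 / c * (c * A * β - B * α) ^ 2 := by field_simp; ring
      have : 0 ≤ 1 / c * (c * A * β - B * α) ^ 2 := by positivity
      linarith
    rw [← hdec, one_pow] at cs
    exact cs.trans (mul_le_of_le_one_right (by positivity) key)
  intro w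
  by_cases hw : w = 0
  · subst hw
    have : pnorm q 0 = 0 := by
      have := pnorm_smul hq0 0 (0 : ℝ × ℝ)
      simpa using this
    rw [this]; simp [dot]
  have hN := pnorm_pos hq0 hw
  have := hunit _ (pnorm_normalize hq0 hw)
  rw [dot_smul, dot_smul, mul_pow, mul_pow, inv_pow] at this
  have hN2 : 0 < pnorm q w ^ 2 := by positivity
  have h3 := mul_le_mul_of_nonneg_left this hN2.le
  have h4 : pnorm q w ^ 2 * ((pnorm q w ^ 2)⁻¹ * dot (spow v (q - 1)) w ^ 2 +
      1 / c * ((pnorm q w ^ 2)⁻¹ * dot (rot v) w ^ 2)) =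
      dot (spow v (q - 1)) w ^ 2 + 1 / c * dot (rot v) w ^ 2 := by field_simp
  linarith

/-! ### Structure of contractions attaining their norm -/

lemma app_tensor (u v z : ℝ × ℝ) : app (tensor u v) z = dot u z • v := by
  ext <;> simp [app, tensor, dot] <;> ring

lemma app_add (A B : Matrix (Fin 2) (Fin 2) ℝ) (z : ℝ × ℝ) :
    app (A + B) z = app A z + app B z := by
  ext <;> simp [app] <;> ring

lemma app_add_right (A : Matrix (Fin 2) (Fin 2) ℝ) (z w : ℝ × ℝ) :
    app A (z + w) = app A z + app A w := by
  ext <;> simp [app] <;> ring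

lemma dot_add (a z w : ℝ × ℝ) : dot a (z + w) = dot a z + dot a w := by
  simp [dot]; ring

/-- The decomposition of a vector along the basis `u, f^o`, when `f · u = 1`. -/
lemma decomp {f u : ℝ × ℝ} (h : dot f u = 1) (z : ℝ × ℝ) :
    z = dot f z • u + dot (rot u) z • rot f := by
  simp only [dot] at h
  ext <;> simp [dot, rot]
  · linear_combination (-z.1) * h
  · linear_combination (-z.2) * h

/-- If a contraction `S` maps the unit vector `u` to the unit vector `v`, then `S` maps the
tangent direction `f^o` at `u` into the tangent direction at `v`. -/
lemma attain_orth {p q : ℝ} (hp : 1 < p) (hq : 1 < q) {S : Matrix (Fin 2) (Fin 2) ℝ}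
    (hS : S ∈ unitBall p q) {u : ℝ × ℝ} (hu : pnorm p u = 1) (hv : pnorm q (app S u) = 1)
    (hu1 : u.1 ≠ 0) (hu2 : u.2 ≠ 0) (hv1 : (app S u).1 ≠ 0) (hv2 : (app S u).2 ≠ 0) :
    dot (spow (app S u) (q - 1)) (app S (rot (spow u (p - 1)))) = 0 := by
  obtain ⟨C, hC, hup⟩ := upper_bound hp (m := min |u.1| |u.2|)
    (lt_min (abs_pos.2 hu1) (abs_pos.2 hu2))
  obtain ⟨c, hc, hlo⟩ := lower_bound hq (m := min |(app S u).1| |(app S u).2|)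
    (lt_min (abs_pos.2 hv1) (abs_pos.2 hv2))
  have hup := hup u hu (min_le_left _ _) (min_le_right _ _)
  have hlo := hlo _ hv (min_le_left _ _) (min_le_right _ _)
  have hfu := dot_spow_self hp hu
  have hgv := dot_spow_self hq hv
  set f := spow u (p - 1)
  set v := app S u
  set g := spow v (q - 1)
  set β := dot g (app S (rot f))
  have key : ∀ b : ℝ, (1 + b * β) ^ 2 ≤ 1 + C * b ^ 2 := by
    intro b
    have h1 := hup (u + b • rot f)
    have h2 := hlo (app S (u + b • rot f))
    have h3 := pow_le_pow_left₀ (pnorm_nonneg q _)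
      (pnorm_app_le (by linarith) (by linarith) hS (u + b • rot f)) 2
    have e1 : dot f (u + b • rot f) = 1 := by
      rw [dot_add, dot_smul, hfu]; simp [dot, rot]; ring_nf; simp
    have e2 : dot (rot u) (u + b • rot f) = b := by
      have : dot (rot u) (rot f) = 1 := by rw [← hfu]; simp [dot, rot]; ring
      rw [dot_add, dot_smul, this]; simp [dot, rot]; ring
    have e3 : dot g (app S (u + b • rot f)) = 1 + b * β := by
      rw [app_add_right, app_smul, dot_add, dot_smul, hgv]
    rw [e1, e2] at h1
    rw [e3] at h2
    have : 0 ≤ c * dot (rot v) (app S (u + b • rot f)) ^ 2 := by positivity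
    linarith
  -- comparing first order terms in `b` at the scale `b = β / C`
  have h := key (β / C)
  have h1 : (1 + β / C * β) ^ 2 = 1 + 2 * (β ^ 2 / C) + (β ^ 2 / C) ^ 2 := by ring
  have h2 : C * (β / C) ^ 2 = β ^ 2 / C := by field_simp
  rw [h1, h2] at h
  have h3 : β ^ 2 / C ≤ 0 := by nlinarith [sq_nonneg (β ^ 2 / C)]
  have h4 : β ^ 2 ≤ 0 := by
    rw [div_le_iff₀ hC] at h3; linarith
  exact pow_eq_zero_iff (two_ne_zero) |>.1 (le_antisymm h4 (sq_nonneg β))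

lemma extreme_perturb {p q : ℝ} {S D : Matrix (Fin 2) (Fin 2) ℝ}
    (hS : S ∈ Set.extremePoints ℝ (unitBall p q)) (h1 : S + D ∈ unitBall p q)
    (h2 : S - D ∈ unitBall p q) : D = 0 := by
  have := hS.2 h1 h2 ⟨1 / 2, 1 / 2, by norm_num, by norm_num, by norm_num, by
    rw [← smul_add, add_add_sub_cancel, ← two_smul ℝ S, smul_smul]; norm_num⟩
  simpa using this

lemma extreme_attains {p q : ℝ} (hp : 0 < p) (hq : 0 < q) {S : Matrix (Fin 2) (Fin 2) ℝ}
    (hS : S ∈ Set.extremePoints ℝ (unitBall p q)) (h0 : S ≠ 0) :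
    ∃ u, pnorm p u = 1 ∧ pnorm q (app S u) = 1 := by
  obtain ⟨u, hu, hmax⟩ := (isCompact_pnorm_sphere hp).exists_isMaxOn ⟨(1, 0), pnorm_e1 hp⟩
    ((continuous_pnorm hq).comp (continuous_app S)).continuousOn
  refine ⟨u, hu, ?_⟩
  have hle := (mem_unitBall hp hq).1 hS.1 u hu
  by_contra hne
  have hlt := lt_of_le_of_ne hle hne
  set N := pnorm q (app S u)
  have hN0 : 0 ≤ N := pnorm_nonneg q _
  have hall : ∀ z, pnorm p z = 1 → pnorm q (app S z) ≤ N := fun z hz => hmax hz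
  -- a contraction of norm `N < 1` is the midpoint of `(2 - N) S` and `N S`
  have hD := extreme_perturb (D := (1 - N) • S) hS
    (by
      have : S + (1 - N) • S = (2 - N) • S := by module
      rw [this, mem_unitBall hp hq]
      intro z hz
      rw [app_smul_left, pnorm_smul hq, abs_of_pos (by linarith)]
      nlinarith [hall z hz])
    (by
      have : S - (1 - N) • S = N • S := by module
      rw [this, mem_unitBall hp hq]
      intro z hz
      rw [app_smul_left, pnorm_smul hq, abs_of_nonneg hN0]
      nlinarith [hall z hz])
  exact h0 ((smul_eq_zero.1 hD).resolve_left (by linarith))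

/-- Moving the coefficient of `u^o ⊗ g^o` by `η` keeps the operator a contraction as long as the
new coefficient is small compared to the constants of the quadratic bounds. -/
lemma perturb_mem {p q : ℝ} (hp : 1 < p) (hq : 1 < q) {S : Matrix (Fin 2) (Fin 2) ℝ}
    {u : ℝ × ℝ} (hu : pnorm p u = 1) (hv : pnorm q (app S u) = 1)
    (horth : dot (spow (app S u) (q - 1)) (app S (rot (spow u (p - 1)))) = 0)
    {c C : ℝ}
    (hlo : ∀ z, dot (spow u (p - 1)) z ^ 2 + c * dot (rot u) z ^ 2 ≤ pnorm p z ^ 2)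
    (hup : ∀ w, pnorm q w ^ 2 ≤
      dot (spow (app S u) (q - 1)) w ^ 2 + C * dot (rot (app S u)) w ^ 2)
    {η : ℝ}
    (hη : C * (dot (rot (app S u)) (app S (rot (spow u (p - 1)))) + η) ^ 2 ≤ c) :
    S + η • tensor (rot u) (rot (spow (app S u) (q - 1))) ∈ unitBall p q := by
  have hfu := dot_spow_self hp hu
  have hgv := dot_spow_self hq hv
  set f := spow u (p - 1)
  set v := app S u with hvdef
  set g := spow v (q - 1)
  set s := dot (rot v) (app S (rot f)) with hs
  rw [mem_unitBall (by linarith) (by linarith)]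
  intro z hz
  have hSf : app S (rot f) = s • rot g := by
    have := decomp hgv (app S (rot f))
    rw [horth, zero_smul, zero_add] at this
    exact this
  have hSz : app (S + η • tensor (rot u) (rot g)) z
      = dot f z • v + ((s + η) * dot (rot u) z) • rot g := by
    rw [app_add, app_smul_left, app_tensor]
    nth_rewrite 1 [decomp hfu z]
    rw [app_add_right, app_smul, app_smul, hSf, ← hvdef]
    module
  have h1 := hup (dot f z • v + ((s + η) * dot (rot u) z) • rot g)
  have e1 : dot g (dot f z • v + ((s + η) * dot (rot u) z) • rot g) = dot f z := by
    have : dot g (rot g) = 0 := by simp [dot, rot]; ring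
    rw [dot_add, dot_smul, dot_smul, this, hgv]; ring
  have e2 : dot (rot v) (dot f z • v + ((s + η) * dot (rot u) z) • rot g)
      = (s + η) * dot (rot u) z := by
    have h : dot (rot v) (rot g) = 1 := by rw [← hgv]; simp [dot, rot]; ring
    have h' : dot (rot v) v = 0 := by simp [dot, rot]; ring
    rw [dot_add, dot_smul, dot_smul, h, h']; ring
  rw [e1, e2] at h1
  have h2 := hlo z
  rw [hz] at h2
  have h3 := mul_le_mul_of_nonneg_right hη (sq_nonneg (dot (rot u) z))
  rw [hSz]
  have h4 : pnorm q (dot f z • v + ((s + η) * dot (rot u) z) • rot g) ^ 2 ≤ 1 ^ 2 := by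
    nlinarith
  exact (pow_le_pow_iff_left₀ (pnorm_nonneg q _) zero_le_one two_ne_zero).1 h4

/-- In all the solved cases, a norm-one rank-one operator x^{p−1}⊗y with
  x1·x2·y1·y2 ≠ 0 is not in the operator-norm closure of the extreme contractions. -/
theorem stmt_17 (p q : ℝ) (hp : 1 < p) (hq : 1 < q)
    (h : (p = 2 ∧ q = 2) ∨ (p = 2 ∧ q ≠ 2) ∨ (q = 2 ∧ p ≠ 2) ∨ (p = q ∧ p ≠ 2) ∨
         (q < 2 ∧ 2 < p))
    (x y : ℝ × ℝ) (hx : pnorm p x = 1) (hy : pnorm q y = 1)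
    (hxy : x.1 * x.2 * y.1 * y.2 ≠ 0) :
    opNorm p q (tensor (spow x (p - 1)) y) = 1 ∧
    ¬ (∀ ε : ℝ, 0 < ε → ∃ S ∈ Set.extremePoints ℝ (unitBall p q),
        opNorm p q (tensor (spow x (p - 1)) y - S) < ε) := by
  have hp0 : 0 < p := by linarith
  have hq0 : 0 < q := by linarith
  obtain ⟨⟨⟨hx1, hx2⟩, hy1⟩, hy2⟩ : ((x.1 ≠ 0 ∧ x.2 ≠ 0) ∧ y.1 ≠ 0) ∧ y.2 ≠ 0 := by
    simpa only [mul_ne_zero_iff] using hxy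
  -- a common lower bound for the coordinates, with room for small perturbations
  obtain ⟨m, hm, hmx1, hmx2, hmy1, hmy2⟩ :
      ∃ m : ℝ, 0 < m ∧ m < |x.1| ∧ m < |x.2| ∧ m < |y.1| ∧ m < |y.2| := by
    obtain ⟨m, hm, hlt⟩ := exists_between (lt_min (lt_min (abs_pos.2 hx1) (abs_pos.2 hx2))
      (lt_min (abs_pos.2 hy1) (abs_pos.2 hy2)))
    simp only [lt_min_iff] at hlt
    exact ⟨m, hm, hlt.1.1, hlt.1.2, hlt.2.1, hlt.2.2⟩
  obtain ⟨c, hc, hlo⟩ := lower_bound hp hm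
  obtain ⟨C, hC, hup⟩ := upper_bound hq hm
  have hfx := dot_spow_self hp hx
  have hlox := hlo x hx hmx1.le hmx2.le
  set F := spow x (p - 1) with hF
  set T := tensor F y with hT
  have hTz : ∀ z, pnorm q (app T z) = |dot F z| := by
    intro z; rw [hT, app_tensor, pnorm_smul hq0, hy, mul_one]
  have hT1 : opNorm p q T = 1 := by
    refine le_antisymm (opNorm_le hp0 fun z hz => ?_) ?_
    · rw [hTz, ← sq_le_one_iff_abs_le_one]
      have := hlox z
      rw [hz] at this
      nlinarith [mul_nonneg hc.le (sq_nonneg (dot (rot x) z))]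
    · have := le_opNorm hp0 hq0 T hx
      rwa [hTz, hfx, abs_one] at this
  refine ⟨hT1, fun hcl => ?_⟩
  choose S hSext hSlt using fun n : ℕ => hcl (1 / ((n : ℝ) + 1)) Nat.one_div_pos_of_nat
  have hS0 : ∀ n, S n ≠ 0 := by
    intro n h0
    have h1 := hSlt n
    rw [h0, sub_zero, hT1, lt_div_iff₀ (by positivity)] at h1
    have : (0 : ℝ) ≤ n := n.cast_nonneg
    linarith
  choose u hu hSu using fun n => extreme_attains hp0 hq0 (hSext n) (hS0 n)
  obtain ⟨a, ha, φ, hφ, hlim⟩ := (isCompact_pnorm_sphere hp0).tendsto_subseq hu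
  have ha1 : pnorm p a = 1 := ha
  have hSlim : ∀ i j, Tendsto (fun n => S (φ n) i j) atTop (𝓝 (T i j)) := by
    intro i j
    refine Tendsto.comp (g := fun n => S n i j) ?_ hφ.tendsto_atTop
    rw [tendsto_iff_norm_sub_tendsto_zero]
    refine squeeze_zero (fun _ => norm_nonneg _) (fun n => ?_)
      (tendsto_one_div_add_atTop_nhds_zero_nat (𝕜 := ℝ))
    have := abs_entry_le hp0 hq0 (T - S n) i j
    rw [Matrix.sub_apply, abs_sub_comm] at this
    exact this.trans (hSlt n).le
  have happ : ∀ (w : ℕ → ℝ × ℝ) (b : ℝ × ℝ), Tendsto w atTop (𝓝 b) →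
      Tendsto (fun n => app (S (φ n)) (w n)) atTop (𝓝 (app T b)) := by
    intro w b hw
    have w1 := (continuous_fst.tendsto b).comp hw
    have w2 := (continuous_snd.tendsto b).comp hw
    exact (((hSlim 0 0).mul w1).add ((hSlim 0 1).mul w2)).prodMk_nhds
      (((hSlim 1 0).mul w1).add ((hSlim 1 1).mul w2))
  have hvlim : Tendsto (fun n => app (S (φ n)) (u (φ n))) atTop (𝓝 (app T a)) := happ _ a hlim
  have hTa : |dot F a| = 1 := by
    rw [← hTz]
    refine tendsto_nhds_unique (((continuous_pnorm hq0).tendsto _).comp hvlim) ?_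
    exact tendsto_const_nhds.congr fun n => (hSu (φ n)).symm
  have hrot : dot (rot x) a = 0 := by
    have h1 := hlox a
    rw [ha1, ← sq_abs (dot F a), hTa] at h1
    have h2 : c * dot (rot x) a ^ 2 ≤ 0 := by linarith
    have h3 : dot (rot x) a ^ 2 ≤ 0 := by
      by_contra! h3
      linarith [mul_pos hc h3]
    exact pow_eq_zero_iff two_ne_zero |>.1 (le_antisymm h3 (sq_nonneg _))
  have hax : a = dot F a • x := by
    have := decomp hfx a
    rwa [hrot, zero_smul, add_zero] at this
  have hTay : app T a = dot F a • y := app_tensor F y a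
  have hFr : app T (rot (spow a (p - 1))) = 0 := by
    have key : dot F (rot (spow a (p - 1))) = 0 := by
      rcases (abs_eq zero_le_one).1 hTa with h1 | h1
      · rw [hax, h1, one_smul, ← hF]; simp [dot, rot]; ring
      · rw [hax, h1, spow_eq]
        simp only [Prod.smul_fst, Prod.smul_snd, smul_eq_mul, neg_one_mul, sp_neg]
        simp only [hF, spow_eq, dot, rot]; ring
    rw [hT, app_tensor, key, zero_smul]
  have hslim : Tendsto (fun n => dot (rot (app (S (φ n)) (u (φ n))))
      (app (S (φ n)) (rot (spow (u (φ n)) (p - 1))))) atTop (𝓝 0) := by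
    have hrc : Continuous rot := by unfold rot; fun_prop
    have h1 := (hrc.tendsto _).comp hvlim
    have h2 := happ _ _ ((hrc.tendsto _).comp
      (((continuous_spow (r := p - 1) (by linarith)).tendsto a).comp hlim))
    have hdc : Continuous fun ab : (ℝ × ℝ) × (ℝ × ℝ) => dot ab.1 ab.2 := by
      unfold dot; fun_prop
    have h3 := (hdc.tendsto _).comp (h1.prodMk_nhds h2)
    have h4 : dot (rot (app T a)) 0 = 0 := by simp [dot]
    rw [hFr, h4] at h3
    exact h3
  obtain ⟨δ, hδ, hδc⟩ : ∃ δ : ℝ, 0 < δ ∧ C * (2 * δ) ^ 2 = c := by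
    refine ⟨Real.sqrt (c / C) / 2, by positivity, ?_⟩
    rw [mul_div_cancel₀ _ two_ne_zero, Real.sq_sqrt (by positivity)]
    field_simp
  have lim_abs : ∀ (w : ℕ → ℝ × ℝ) (b : ℝ × ℝ), Tendsto w atTop (𝓝 b) → m < |b.1| → m < |b.2| →
      ∀ᶠ n in atTop, m < |(w n).1| ∧ m < |(w n).2| := by
    intro w b hw h1 h2
    exact (((continuous_fst.abs.tendsto b).comp hw).eventually_const_lt h1).and
      (((continuous_snd.abs.tendsto b).comp hw).eventually_const_lt h2)
  have ev1 := lim_abs _ _ hlim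
    (by rw [hax]; simpa [abs_mul, hTa] using hmx1) (by rw [hax]; simpa [abs_mul, hTa] using hmx2)
  have ev2 := lim_abs _ _ hvlim
    (by rw [hTay]; simpa [abs_mul, hTa] using hmy1) (by rw [hTay]; simpa [abs_mul, hTa] using hmy2)
  have ev3 := (hslim.abs).eventually_lt_const (by simpa using hδ)
  obtain ⟨n, ⟨⟨hn1, hn2⟩, hn3, hn4⟩, hn5⟩ := ((ev1.and ev2).and ev3).exists
  simp only [Function.comp] at hn1 hn2
  have nz : ∀ t : ℝ, m < |t| → t ≠ 0 := fun t ht => abs_pos.1 (hm.trans ht)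
  have hun := hu (φ n)
  have hvn := hSu (φ n)
  have horth := attain_orth hp hq (hSext (φ n)).1 hun hvn (nz _ hn1) (nz _ hn2) (nz _ hn3)
    (nz _ hn4)
  have hlon := hlo _ hun hn1.le hn2.le
  have hupn := hup _ hvn hn3.le hn4.le
  have hn5' := abs_lt.1 hn5
  have hsmall : ∀ r : ℝ, |r| ≤ 2 * δ → C * r ^ 2 ≤ c := by
    intro r hr
    rw [← hδc]
    refine mul_le_mul_of_nonneg_left ?_ hC.le
    rw [← sq_abs]
    exact pow_le_pow_left₀ (abs_nonneg _) hr 2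
  have m1 := perturb_mem hp hq hun hvn horth hlon hupn (η := δ)
    (hsmall _ (abs_le.2 ⟨by linarith, by linarith⟩))
  have m2 := perturb_mem hp hq hun hvn horth hlon hupn (η := -δ)
    (hsmall _ (abs_le.2 ⟨by linarith, by linarith⟩))
  rw [neg_smul, ← sub_eq_add_neg] at m2
  have hD := extreme_perturb (hSext (φ n)) m1 m2
  have hD' := (smul_eq_zero.1 hD).resolve_left hδ.ne'
  have h00 := congrFun (congrFun hD' 0) 0
  have hg2 : sp (app (S (φ n)) (u (φ n))).2 (q - 1) ≠ 0 := by
    rw [← abs_pos, abs_sp _ (by linarith)]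
    exact Real.rpow_pos_of_pos (hm.trans hn4) _
  have hu2 := nz _ hn2
  simp [tensor, rot, spow_eq, hg2, hu2] at h00
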